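/- Let R be a commutative ring, I ⊆ R a finitely generated ideal, and A an associative unital R-algebra. Suppose that A, regarded as an R-module, is I-adically complete and separated (i.e. the canonical map A → lim_n A/I^nA is bijective). If the quotient ring A/IA is left Noetherian, then A is left Noetherian. -/

import Mathlib

namespace AdicNoeth

/-- The monomial `h ^ α`. -/
def mon {R : Type*} [CommRing R] {r : ℕ} (h : Fin r → R) (α : Fin r →₀ ℕ) : R :=
  α.prod fun i k => h i ^ k

/-- The ideal spanned by a set of monomials. -/
def K {R : Type*} [CommRing R] {r : ℕ} (h : Fin r → R) (U : Set (Fin r →₀ ℕ)) : Ideal R :=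
  Ideal.span (mon h '' U)

/-- Indices strictly above `α` for the degree-lexicographic order. -/
def up {r : ℕ} (α : Fin r →₀ ℕ) : Set (Fin r →₀ ℕ) := {β | toDegLex α < toDegLex β}

section mons
variable {R : Type*} [CommRing R] {r : ℕ} (h : Fin r → R)

lemma mon_add (α β : Fin r →₀ ℕ) : mon h (α + β) = mon h α * mon h β := by
  unfold mon
  exact Finsupp.prod_add_index' (by simp) (by intros; rw [pow_add])

lemma mon_single (i : Fin r) : mon h (Finsupp.single i 1) = h i := by
  simp [mon]

lemma mon_mem {I : Ideal R} (hI : ∀ i, h i ∈ I) (α : Fin r →₀ ℕ) : mon h α ∈ I ^ α.degree := by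
  induction α using Finsupp.induction with
  | zero => simp
  | single_add i k f _ _ ih =>
    rw [mon_add, map_add, pow_add, Finsupp.degree_single]
    refine Ideal.mul_mem_mul ?_ ih
    have : mon h (Finsupp.single i k) = h i ^ k := by simp [mon]
    rw [this]
    exact Ideal.pow_mem_pow (hI i) k

lemma pow_le (n : ℕ) : Ideal.span (Set.range h) ^ n ≤ K h {β | n ≤ β.degree} := by
  induction n with
  | zero =>
    rw [pow_zero, Ideal.one_eq_top, top_le_iff, Ideal.eq_top_iff_one]
    refine Ideal.subset_span ⟨0, by simp, by simp [mon]⟩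
  | succ n ih =>
    rw [pow_succ]
    refine (Ideal.mul_mono_left ih).trans ?_
    unfold K
    rw [Ideal.span_mul_span', Ideal.span_le]
    rintro _ ⟨_, ⟨β, hβ, rfl⟩, _, ⟨i, rfl⟩, rfl⟩
    refine Ideal.subset_span ⟨β + Finsupp.single i 1, ?_, ?_⟩
    · simpa using hβ
    · simp [mon_add, mon_single]

lemma K_le_pow {I : Ideal R} (hI : ∀ i, h i ∈ I) {n : ℕ} {U : Set (Fin r →₀ ℕ)}
    (hU : ∀ β ∈ U, n ≤ β.degree) : K h U ≤ I ^ n := by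
  unfold K
  rw [Ideal.span_le]
  rintro _ ⟨β, hβ, rfl⟩
  exact Ideal.pow_le_pow_right (hU β hβ) (mon_mem h hI β)

lemma K_mono {U V : Set (Fin r →₀ ℕ)} (hUV : U ⊆ V) : K h U ≤ K h V :=
  Ideal.span_mono (Set.image_mono hUV)

lemma up_add {α β : Fin r →₀ ℕ} (γ : Fin r →₀ ℕ) (hβ : β ∈ up α) : γ + β ∈ up (γ + α) := by
  unfold up at *
  simp only [Set.mem_ofPred_eq, toDegLex_add] at *
  exact add_lt_add_right hβ _

lemma mon_mul_K (α γ : Fin r →₀ ℕ) {x : R} (hx : x ∈ K h (up α)) :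
    mon h γ * x ∈ K h (up (γ + α)) := by
  unfold K at hx
  induction hx using Submodule.span_induction with
  | mem x hx =>
    obtain ⟨β, hβ, rfl⟩ := hx
    exact Ideal.subset_span ⟨γ + β, up_add γ hβ, mon_add h γ β⟩
  | zero => simp
  | add x y _ _ hx hy => rw [mul_add]; exact add_mem hx hy
  | smul a x _ hx =>
    rw [smul_eq_mul, mul_left_comm]; exact Ideal.mul_mem_left _ _ hx

lemma mem_up_of_degree {α β : Fin r →₀ ℕ} (hd : α.degree < β.degree) : β ∈ up α := by
  unfold up
  simp only [Set.mem_ofPred_eq, Finsupp.DegLex.lt_iff]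
  exact Or.inl hd

lemma degree_le_of_mem_up {α β : Fin r →₀ ℕ} (hd : β ∈ up α) : α.degree ≤ β.degree := by
  unfold up at hd
  simp only [Set.mem_ofPred_eq, Finsupp.DegLex.lt_iff] at hd
  rcases hd with hd | hd
  · exact hd.le
  · exact hd.1.le

lemma mul_mon_mem {x : R} (hx : x ∈ Ideal.span (Set.range h)) (α : Fin r →₀ ℕ) :
    mon h α * x ∈ K h (up α) := by
  induction hx using Submodule.span_induction with
  | mem x hx =>
    obtain ⟨i, rfl⟩ := hx
    refine Ideal.subset_span ⟨α + Finsupp.single i 1, mem_up_of_degree (by simp), ?_⟩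
    rw [mon_add, mon_single]
  | zero => simp
  | add x y _ _ hx hy => rw [mul_add]; exact add_mem hx hy
  | smul a x _ hx =>
    rw [smul_eq_mul, mul_left_comm]; exact Ideal.mul_mem_left _ _ hx

end mons

lemma finite_minimal {r : ℕ} {A M : Type*} [Ring A] [AddCommGroup M] [Module A M]
    [IsNoetherian A M] (L : (Fin r →₀ ℕ) → Submodule A M) (hL : Monotone L) :
    ∃ S : Finset (Fin r →₀ ℕ), ∀ α, ∃ β ∈ S, β ≤ α ∧ L β = L α := by
  classical
  let T : Set (Fin r →₀ ℕ) := {α | ∀ β < α, L β ≠ L α}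
  have hT : T.Finite := by
    by_contra hinf
    have hinf : T.Infinite := hinf
    let e := hinf.natEmbedding
    obtain ⟨g, hg⟩ := (wellQuasiOrdered_le (α := Fin r →₀ ℕ)).exists_monotone_subseq
      (fun n => (e n : Fin r →₀ ℕ))
    have hs : StrictMono (fun n => L (e (g n) : Fin r →₀ ℕ)) := by
      intro a b hab
      have hle := hg a b hab.le
      have hne : (e (g a) : Fin r →₀ ℕ) ≠ e (g b) := by
        intro hh
        exact hab.ne (g.injective (e.injective (Subtype.ext hh)))
      exact lt_of_le_of_ne (hL hle) ((e (g b)).2 _ (lt_of_le_of_ne hle hne))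
    exact not_strictMono_of_wellFoundedGT _ hs
  refine ⟨hT.toFinset, fun α => ?_⟩
  induction α using WellFoundedLT.induction with
  | ind α ih =>
    by_cases hα : α ∈ T
    · exact ⟨α, by simpa using hα, le_rfl, rfl⟩
    · simp only [T, Set.mem_ofPred_eq, not_forall, not_not] at hα
      obtain ⟨β, hβ, hLβ⟩ := hα
      obtain ⟨γ, hγ, h1, h2⟩ := ih β hβ
      exact ⟨γ, hγ, h1.trans hβ.le, h2.trans hLβ⟩

section alg
variable {R : Type*} [CommRing R] {A : Type*} [Ring A] [Algebra R A]

lemma mul_mem_smul_top (K : Ideal R) (a : A) {x : A} (hx : x ∈ K • (⊤ : Submodule R A)) :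
    a * x ∈ K • (⊤ : Submodule R A) := by
  induction hx using Submodule.smul_induction_on' with
  | smul k hk y _ =>
    rw [mul_smul_comm]; exact Submodule.smul_mem_smul hk trivial
  | add x _ y _ hx hy => rw [mul_add]; exact add_mem hx hy

lemma smul_mem_of {K K' : Ideal R} {c : R} (hc : ∀ x ∈ K, c * x ∈ K') {x : A}
    (hx : x ∈ K • (⊤ : Submodule R A)) : c • x ∈ K' • (⊤ : Submodule R A) := by
  induction hx using Submodule.smul_induction_on' with
  | smul k hk y _ =>
    rw [smul_smul]; exact Submodule.smul_mem_smul (hc k hk) trivial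
  | add x _ y _ hx hy => rw [smul_add]; exact add_mem hx hy

lemma mul_mem_smul_top_right (K : Ideal R) (a : A) {x : A} (hx : x ∈ K • (⊤ : Submodule R A)) :
    x * a ∈ K • (⊤ : Submodule R A) := by
  induction hx using Submodule.smul_induction_on' with
  | smul k hk y _ =>
    rw [smul_mul_assoc]; exact Submodule.smul_mem_smul hk trivial
  | add x _ y _ hx hy => rw [add_mul]; exact add_mem hx hy

/-- Leading coefficient ideal. -/
def Lc {r : ℕ} (h : Fin r → R) (J : Ideal A) (α : Fin r →₀ ℕ) : Ideal A where
  carrier := {a | ∃ f ∈ J, f - mon h α • a ∈ K h (up α) • (⊤ : Submodule R A)}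
  zero_mem' := ⟨0, J.zero_mem, by simp⟩
  add_mem' := by
    rintro a b ⟨f, hf, hfa⟩ ⟨g, hg, hgb⟩
    refine ⟨f + g, J.add_mem hf hg, ?_⟩
    have := add_mem hfa hgb
    rwa [sub_add_sub_comm, ← smul_add] at this
  smul_mem' := by
    rintro c a ⟨f, hf, hfa⟩
    refine ⟨c * f, J.mul_mem_left c hf, ?_⟩
    have := mul_mem_smul_top _ c hfa
    rwa [mul_sub, mul_smul_comm] at this

lemma Lc_mono_left {r : ℕ} (h : Fin r → R) {J J' : Ideal A} (hJ : J ≤ J') (α : Fin r →₀ ℕ) :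
    Lc h J α ≤ Lc h J' α := by
  rintro a ⟨f, hf, hfa⟩
  exact ⟨f, hJ hf, hfa⟩

lemma Lc_mono {r : ℕ} (h : Fin r → R) (J : Ideal A) : Monotone (Lc h J) := by
  intro α β hαβ a
  rintro ⟨f, hf, hfa⟩
  obtain ⟨γ, rfl⟩ := exists_add_of_le hαβ
  refine ⟨mon h γ • f, ?_, ?_⟩
  · rw [Algebra.smul_def]; exact J.mul_mem_left _ hf
  · have := smul_mem_of (fun x hx => mon_mul_K h α γ hx) hfa
    rwa [smul_sub, smul_smul, ← mon_add, add_comm γ α] at this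

lemma le_Lc {r : ℕ} (h : Fin r → R) (J : Ideal A) (α : Fin r →₀ ℕ) :
    Ideal.span ((algebraMap R A) '' (Ideal.span (Set.range h) : Set R)) ≤ Lc h J α := by
  rw [Ideal.span_le]
  rintro _ ⟨x, hx, rfl⟩
  refine ⟨0, J.zero_mem, ?_⟩
  rw [zero_sub, neg_mem_iff, Algebra.algebraMap_eq_smul_one, smul_smul]
  exact Submodule.smul_mem_smul (mul_mon_mem h hx α) trivial

lemma exists_fg {r : ℕ} (h : Fin r → R) (hn : IsNoetherian A
      (A ⧸ (Ideal.span ((algebraMap R A) '' (Ideal.span (Set.range h) : Set R)) : Ideal A)))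
    (J : Ideal A) (α : Fin r →₀ ℕ) :
    ∃ N : Ideal A, N.FG ∧ N ≤ J ∧ Lc h J α ≤ Lc h N α := by
  set Q := (Ideal.span ((algebraMap R A) '' (Ideal.span (Set.range h) : Set R)) : Ideal A) with hQ
  let s : Set (Submodule A (A ⧸ Q)) :=
    {P | ∃ N : Ideal A, N.FG ∧ N ≤ J ∧ P = Submodule.map Q.mkQ (Lc h N α)}
  obtain ⟨P, ⟨N, hN, hNJ, rfl⟩, hmax⟩ :=
    set_has_maximal_iff_noetherian.2 hn s ⟨_, ⊥, Submodule.fg_bot, bot_le, rfl⟩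
  refine ⟨N, hN, hNJ, ?_⟩
  rintro a ⟨f, hf, hfa⟩
  have hle : N ≤ N ⊔ Ideal.span {f} := le_sup_left
  have hmem : a ∈ Lc h (N ⊔ Ideal.span {f}) α :=
    ⟨f, (le_sup_right : _ ≤ N ⊔ Ideal.span {f}) (Ideal.subset_span rfl), hfa⟩
  have hnot := hmax (Submodule.map Q.mkQ (Lc h (N ⊔ Ideal.span {f}) α))
    ⟨_, Submodule.FG.sup hN (Submodule.fg_span_singleton f), sup_le hNJ (by simpa [Ideal.span_le] using hf), rfl⟩
  have hmle : Submodule.map Q.mkQ (Lc h N α) ≤ Submodule.map Q.mkQ (Lc h (N ⊔ Ideal.span {f}) α) :=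
    Submodule.map_mono (Lc_mono_left h hle α)
  have heq := eq_of_le_of_not_lt hmle hnot
  have h1 : Q.mkQ a ∈ Submodule.map Q.mkQ (Lc h N α) := heq ▸ Submodule.mem_map_of_mem hmem
  obtain ⟨b, hb, hab⟩ := h1
  have h2 : b - a ∈ Q := (Submodule.Quotient.eq Q).1 hab
  have := (Lc h N α).sub_mem hb (le_Lc h N α h2)
  simpa using this

lemma exists_fg_all {r : ℕ} (h : Fin r → R) (hn : IsNoetherian A
      (A ⧸ (Ideal.span ((algebraMap R A) '' (Ideal.span (Set.range h) : Set R)) : Ideal A)))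
    (J : Ideal A) :
    ∃ (N : Ideal A) (D : ℕ), N.FG ∧ N ≤ J ∧ ∀ α, ∃ β ≤ α, β.degree ≤ D ∧
      Lc h J α ≤ Lc h N β := by
  set Q := (Ideal.span ((algebraMap R A) '' (Ideal.span (Set.range h) : Set R)) : Ideal A) with hQ
  obtain ⟨S, hS⟩ := finite_minimal (fun α => Submodule.map Q.mkQ (Lc h J α))
    (fun α β hαβ => Submodule.map_mono (Lc_mono h J hαβ))
  choose N hN hNJ hL using exists_fg h hn J
  refine ⟨S.sup N, S.sup Finsupp.degree, Submodule.fg_finset_sup _ _ fun β _ => hN β,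
    Finset.sup_le fun β _ => hNJ β, fun α => ?_⟩
  obtain ⟨β, hβ, hle, heq⟩ := hS α
  refine ⟨β, hle, Finset.le_sup (f := Finsupp.degree) hβ, ?_⟩
  refine le_trans ?_ ((hL β).trans (Lc_mono_left h (Finset.le_sup hβ) β))
  intro a ha
  have h1 : Q.mkQ a ∈ Submodule.map Q.mkQ (Lc h J β) := heq ▸ Submodule.mem_map_of_mem ha
  obtain ⟨b, hb, hab⟩ := h1
  have h2 : b - a ∈ Q := (Submodule.Quotient.eq Q).1 hab
  have := (Lc h J β).sub_mem hb (le_Lc h J β h2)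
  simpa using this

lemma step {r : ℕ} (h : Fin r → R) (J N : Ideal A) (D : ℕ) (hNJ : N ≤ J)
    (hL : ∀ α, ∃ β ≤ α, β.degree ≤ D ∧ Lc h J α ≤ Lc h N β) (n : ℕ)
    (f : A) (hfJ : f ∈ J) (hf : f ∈ Ideal.span (Set.range h) ^ n • (⊤ : Submodule R A)) :
    ∃ y ∈ Ideal.span (Set.range h) ^ (n - D) • N.restrictScalars R,
      f - y ∈ Ideal.span (Set.range h) ^ (n + 1) • (⊤ : Submodule R A) := by
  classical
  set I := Ideal.span (Set.range h) with hI
  have hhI : ∀ i, h i ∈ I := fun i => Ideal.subset_span ⟨i, rfl⟩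
  have key : ∀ T : Finset (DegLex (Fin r →₀ ℕ)), (∀ x ∈ T, (ofDegLex x).degree = n) →
      (∀ x ∈ T, ∀ y, x < y → (ofDegLex y).degree = n → y ∈ T) →
      ∀ f ∈ J, f ∈ K h {β | toDegLex β ∈ T ∨ n + 1 ≤ β.degree} • (⊤ : Submodule R A) →
      ∃ y ∈ I ^ (n - D) • N.restrictScalars R, f - y ∈ I ^ (n + 1) • (⊤ : Submodule R A) := by
    intro T
    induction T using Finset.induction_on_min with
    | empty =>
      intro _ _ f _ hf
      refine ⟨0, zero_mem _, ?_⟩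
      rw [sub_zero]
      exact Submodule.smul_mono_left (K_le_pow h hhI (by simp)) hf
    | insert x T hx ih =>
      intro hdeg hup f hfJ hf
      obtain ⟨α, hαx⟩ : ∃ α : Fin r →₀ ℕ, toDegLex α = x := ⟨ofDegLex x, rfl⟩
      subst hαx
      have hα : α.degree = n := hdeg _ (Finset.mem_insert_self _ _)
      have hsub : K h {β | toDegLex β ∈ insert (toDegLex α) T ∨ n + 1 ≤ β.degree} ≤
          Ideal.span {mon h α} ⊔ K h (up α) := by
        conv_lhs => unfold K
        rw [Ideal.span_le]
        rintro _ ⟨β, hβ, rfl⟩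
        simp only [Set.mem_ofPred_eq, Finset.mem_insert] at hβ
        rcases hβ with (hβ | hβ) | hβ
        · rw [toDegLex_inj.1 hβ]
          exact (le_sup_left : _ ≤ Ideal.span {mon h α} ⊔ K h (up α)) (Ideal.subset_span rfl)
        · exact (le_sup_right : _ ≤ Ideal.span {mon h α} ⊔ K h (up α))
            (Ideal.subset_span ⟨β, hx _ hβ, rfl⟩)
        · exact (le_sup_right : _ ≤ Ideal.span {mon h α} ⊔ K h (up α))
            (Ideal.subset_span ⟨β, mem_up_of_degree (by omega), rfl⟩)
      have hf2 := Submodule.smul_mono_left (N := (⊤ : Submodule R A)) hsub hf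
      rw [Submodule.sup_smul, Submodule.mem_sup] at hf2
      obtain ⟨u, hu, z, hz, rfl⟩ := hf2
      rw [Submodule.ideal_span_singleton_smul] at hu
      obtain ⟨c, -, rfl⟩ := hu
      change mon h α • c + z ∈ J at hfJ
      obtain ⟨β, hβα, hβD, hLβ⟩ := hL α
      have hc : c ∈ Lc h J α := ⟨_, hfJ, by simpa using hz⟩
      obtain ⟨g, hgN, hg⟩ := hLβ hc
      obtain ⟨γ, rfl⟩ := exists_add_of_le hβα
      have hg2 := smul_mem_of (fun x hx => mon_mul_K h β γ hx) hg
      rw [smul_sub, smul_smul, ← mon_add, add_comm γ β] at hg2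
      have hy1 : mon h γ • g ∈ I ^ (n - D) • N.restrictScalars R := by
        refine Submodule.smul_mem_smul ?_ hgN
        refine Ideal.pow_le_pow_right ?_ (mon_mem h hhI γ)
        rw [map_add] at hα
        omega
      have hyN : mon h γ • g ∈ N := by
        rw [Algebra.smul_def]; exact N.mul_mem_left _ hgN
      have hrem : mon h (β + γ) • c + z - mon h γ • g ∈
          K h (up (β + γ)) • (⊤ : Submodule R A) := by
        have := sub_mem hz hg2
        convert this using 1
        abel
      have hle : K h (up (β + γ)) ≤ K h {δ | toDegLex δ ∈ T ∨ n + 1 ≤ δ.degree} := by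
        refine K_mono h fun δ hδ => ?_
        have hd := degree_le_of_mem_up hδ
        by_cases hn : n + 1 ≤ δ.degree
        · exact Or.inr hn
        · left
          have := hup _ (Finset.mem_insert_self _ _) (toDegLex δ) hδ
            (show δ.degree = n by omega)
          rcases Finset.mem_insert.1 this with h1 | h1
          · exact absurd h1 (ne_of_gt hδ)
          · exact h1
      obtain ⟨y, hy, hfy⟩ := ih (fun x hx => hdeg x (Finset.mem_insert_of_mem hx))
        (fun x hxT y hxy hy => by
          rcases Finset.mem_insert.1 (hup x (Finset.mem_insert_of_mem hxT) y hxy hy) with h1 | h1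
          · exact absurd (hxy.trans' (hx x hxT)) (by rw [h1]; exact lt_irrefl _)
          · exact h1) _ (J.sub_mem hfJ (hNJ hyN)) (Submodule.smul_mono_left hle hrem)
      refine ⟨mon h γ • g + y, add_mem hy1 hy, ?_⟩
      rwa [← sub_sub]
  have hfin : {x : DegLex (Fin r →₀ ℕ) | (ofDegLex x).degree = n}.Finite := by
    have : {x : Fin r →₀ ℕ | x.degree = n}.Finite := by
      refine (Finset.finite_toSet (Finset.finsuppAntidiag Finset.univ n)).subset ?_
      intro x hx
      simpa [Finset.mem_finsuppAntidiag, Finsupp.degree_eq_sum] using hx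
    exact this
  refine key hfin.toFinset (by simp) (by simp) f hfJ ?_
  refine Submodule.smul_mono_left ((pow_le h n).trans (K_mono h ?_)) hf
  intro β hβ
  simp only [Set.Finite.mem_toFinset, Set.mem_ofPred_eq] at hβ ⊢
  rcases hβ.eq_or_lt with h1 | h1
  · exact Or.inl h1.symm
  · exact Or.inr h1

lemma mem_of_steps (I : Ideal R) (hc : IsAdicComplete I A) (J N : Ideal A) (D : ℕ)
    (hfg : N.FG) (hNJ : N ≤ J)
    (hstep : ∀ n, ∀ f ∈ J, f ∈ I ^ n • (⊤ : Submodule R A) →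
      ∃ y ∈ I ^ (n - D) • N.restrictScalars R, f - y ∈ I ^ (n + 1) • (⊤ : Submodule R A)) :
    J ≤ N := by
  obtain ⟨s, g, hg⟩ := Submodule.fg_iff_exists_fin_generating_family.1 hfg
  have hgN : ∀ i, g i ∈ N := fun i => hg ▸ Submodule.subset_span ⟨i, rfl⟩
  have hcoef : ∀ k, ∀ y ∈ I ^ k • N.restrictScalars R,
      ∃ b : Fin s → A, (∀ i, b i ∈ I ^ k • (⊤ : Submodule R A)) ∧ y = ∑ i, b i * g i := by
    intro k y hy
    induction hy using Submodule.smul_induction_on' with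
    | smul c hc x hx =>
      have hx : x ∈ N := hx
      rw [← hg] at hx
      obtain ⟨b, rfl⟩ := (Submodule.mem_span_range_iff_exists_fun A).1 hx
      refine ⟨fun i => c • b i, fun i => Submodule.smul_mem_smul hc trivial, ?_⟩
      simp [Finset.smul_sum]
    | add x _ y _ hx hy =>
      obtain ⟨b, hb, rfl⟩ := hx
      obtain ⟨b', hb', rfl⟩ := hy
      exact ⟨b + b', fun i => add_mem (hb i) (hb' i), by simp [add_mul, Finset.sum_add_distrib]⟩
  have hstep2 : ∀ n, ∀ f : {f : A // f ∈ J ∧ f ∈ I ^ n • (⊤ : Submodule R A)},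
      ∃ b : Fin s → A, (∀ i, b i ∈ I ^ (n - D) • (⊤ : Submodule R A)) ∧
        f.1 - ∑ i, b i * g i ∈ J ∧
        f.1 - ∑ i, b i * g i ∈ I ^ (n + 1) • (⊤ : Submodule R A) := by
    rintro n ⟨f, hfJ, hf⟩
    obtain ⟨y, hy, hfy⟩ := hstep n f hfJ hf
    obtain ⟨b, hb, rfl⟩ := hcoef _ y hy
    refine ⟨b, hb, J.sub_mem hfJ (J.sum_mem fun i _ => J.mul_mem_left _ (hNJ (hgN i))), hfy⟩
  choose b hb hbJ hbI using hstep2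
  intro f hf
  let X : ∀ n, {f : A // f ∈ J ∧ f ∈ I ^ n • (⊤ : Submodule R A)} := fun n =>
    Nat.rec ⟨f, hf, by simp⟩ (fun n x => ⟨_, hbJ n x, hbI n x⟩) n
  have hX0 : (X 0).1 = f := rfl
  have hXs : ∀ n, (X (n + 1)).1 = (X n).1 - ∑ i, b n (X n) i * g i := fun n => rfl
  have hsum : ∀ n, f = (X n).1 + ∑ i, (∑ k ∈ Finset.range n, b k (X k) i) * g i := by
    intro n
    induction n with
    | zero => simp [hX0]
    | succ n ih =>
      simp only [Finset.sum_range_succ, add_mul, Finset.sum_add_distrib, hXs]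
      conv_lhs => rw [ih]
      abel
  have hlim : ∀ i, ∃ l : A, ∀ n, (∑ k ∈ Finset.range (n + D), b k (X k) i) ≡ l
      [SMOD (I ^ n • ⊤ : Submodule R A)] := by
    intro i
    refine hc.toIsPrecomplete.prec' (fun n => ∑ k ∈ Finset.range (n + D), b k (X k) i) ?_
    intro m n hmn
    refine SModEq.symm (SModEq.sub_mem.2 ?_)
    rw [← Finset.sum_Ico_eq_sub _ (by omega : m + D ≤ n + D)]
    refine Submodule.sum_mem _ fun k hk => ?_
    have hk := (Finset.mem_Ico.1 hk).1
    exact Submodule.smul_mono_left (Ideal.pow_le_pow_right (by omega)) (hb k (X k) i)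
  choose l hl using hlim
  have hzero : f - ∑ i, l i * g i = 0 := by
    refine hc.toIsHausdorff.haus' _ fun n => ?_
    rw [SModEq.zero]
    have h1 : f - ∑ i, l i * g i = (X (n + D)).1 +
        ∑ i, ((∑ k ∈ Finset.range (n + D), b k (X k) i) - l i) * g i := by
      simp only [sub_mul, Finset.sum_sub_distrib]
      rw [← add_sub_assoc, ← hsum]
    rw [h1]
    refine add_mem ?_ (Submodule.sum_mem _ fun i _ => mul_mem_smul_top_right _ _ ?_)
    · exact Submodule.smul_mono_left (Ideal.pow_le_pow_right (by omega)) (X (n + D)).2.2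
    · exact SModEq.sub_mem.1 (hl i n)
  rw [sub_eq_zero.1 hzero]
  exact N.sum_mem fun i _ => N.mul_mem_left _ (hgN i)

end alg

end AdicNoeth

/-- Let `R` be a commutative ring, `I ⊆ R` a finitely generated ideal, and `A`
an associative unital `R`-algebra. Suppose that `A`, as an `R`-module, is `I`-adically complete
and separated. If the quotient ring `A/IA` is left Noetherian, then `A` is left Noetherian.
(Left ideals of the quotient ring `A/IA` coincide with `A`-submodules of the `A`-module
`A ⧸ IA`, so the hypothesis on `A/IA` is expressed via `IsNoetherian A (A ⧸ IA)`.) -/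
theorem isNoetherianRing_of_adicComplete {R : Type*} [CommRing R] {A : Type*} [Ring A]
    [Algebra R A] (I : Ideal R) (hfg : I.FG) (hc : IsAdicComplete I A)
    (hnoeth : IsNoetherian A
      (A ⧸ (Ideal.span ((algebraMap R A) '' (I : Set R)) : Ideal A))) :
    IsNoetherianRing A := by
  obtain ⟨r, h, rfl⟩ := Submodule.fg_iff_exists_fin_generating_family.1 hfg
  refine ⟨fun J => ?_⟩
  obtain ⟨N, D, hN, hNJ, hL⟩ := AdicNoeth.exists_fg_all h hnoeth J
  have hJN : J ≤ N := AdicNoeth.mem_of_steps _ hc J N D hN hNJ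
    (fun n f hfJ hf => AdicNoeth.step h J N D hNJ hL n f hfJ hf)
  rwa [le_antisymm hJN hNJ]
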